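/- arXiv:2509.11383 — 5 statements merged into one kernel-verified Lean document; each statement's English description precedes it below -/
import Mathlib

section
/- If 0 < r₁ < r₂ < 1, γ₁ > 0, γ₂ > 0 and r₁·γ₁ ≤ r₂·γ₂, then for every τ ≥ 0 one has K₁(τ) ≤ K₂(τ), where K_i(τ) = μ·((r_i−1)·τ − (r_i/γ_i)·(1 − e^{−γ_i τ})). -/
/-!
The kernel of a class with parameters `r`, `γ` vanishes at `0` and has slope
`μ (r (1 - e^{-γτ}) - 1)`, so it is enough to compare slopes. For fixed `τ ≥ 0` the function
`f γ = 1 - e^{-γτ}` is increasing and concave with `f 0 = 0`, so for `γ₁ ≠ γ₂` the secant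
`γ ↦ A + B γ` through its graph at `γ₁`, `γ₂` has `A ≥ 0` and `B ≥ 0`, and
`r₂ f(γ₂) - r₁ f(γ₁) = A (r₂ - r₁) + B (r₂ γ₂ - r₁ γ₁) ≥ 0`.
-/

section Concave

variable {𝕜 : Type*} [Field 𝕜] [LinearOrder 𝕜] [IsStrictOrderedRing 𝕜]
  {s : Set 𝕜} {f : 𝕜 → 𝕜} {a b x y : 𝕜}

theorem mul_map_le_mul_map_of_concaveOn_of_le (hf : ConcaveOn 𝕜 s f) (h0 : 0 ∈ s) (hf0 : 0 ≤ f 0)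
    (hy : y ∈ s) (hx0 : 0 ≤ x) (hxy : x ≤ y) : x * f y ≤ y * f x := by
  obtain rfl | hx_pos := hx0.eq_or_lt
  · simpa only [zero_mul] using mul_nonneg hxy hf0
  have hy_pos : 0 < y := hx_pos.trans_le hxy
  have h_weight : 0 ≤ 1 - x / y := sub_nonneg.2 (div_le_one_of_le₀ hxy hy_pos.le)
  have h_chord : x / y * f y + (1 - x / y) * f 0 ≤ f x := by
    simpa only [smul_eq_mul, mul_zero, add_zero, div_mul_cancel₀ x hy_pos.ne'] using
      hf.2 hy h0 (div_pos hx_pos hy_pos).le h_weight (add_sub_cancel _ _)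
  calc
    x * f y = y * (x / y * f y) := by field_simp
    _ ≤ y * f x := by
      gcongr
      linarith [mul_nonneg h_weight hf0]

theorem mul_map_le_mul_map_of_concaveOn_of_monotoneOn (hf : ConcaveOn 𝕜 s f)
    (hf_mono : MonotoneOn f s) (h0 : 0 ∈ s) (hf0 : 0 ≤ f 0) (hx : x ∈ s) (hy : y ∈ s)
    (hx0 : 0 ≤ x) (hy0 : 0 ≤ y) (hab : a ≤ b) (h : a * x ≤ b * y) : a * f x ≤ b * f y := by
  wlog hxy : x ≤ y generalizing a b x y
  · -- Negating the coefficients exchanges the roles of `x` and `y`.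
    have h_neg : -b * f y ≤ -a * f x :=
      this hy hx hy0 hx0 (neg_le_neg hab) (by linarith) (le_of_not_ge hxy)
    linarith
  obtain rfl | hxy_lt := hxy.eq_or_lt
  · exact mul_le_mul_of_nonneg_right hab (hf0.trans (hf_mono h0 hx hx0))
  have h_intercept : 0 ≤ y * f x - x * f y :=
    sub_nonneg.2 (mul_map_le_mul_map_of_concaveOn_of_le hf h0 hf0 hy hx0 hxy)
  have h_slope : 0 ≤ f y - f x := sub_nonneg.2 (hf_mono hx hy hxy)
  have h_secant : 0 ≤ (y - x) * (b * f y - a * f x) :=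
    calc
      0 ≤ (b - a) * (y * f x - x * f y) + (b * y - a * x) * (f y - f x) :=
        add_nonneg (mul_nonneg (sub_nonneg.2 hab) h_intercept)
          (mul_nonneg (sub_nonneg.2 h) h_slope)
      _ = (y - x) * (b * f y - a * f x) := by ring
  exact sub_nonneg.1 (nonneg_of_mul_nonneg_right h_secant (sub_pos.2 hxy_lt))

end Concave

theorem concaveOn_one_sub_exp_neg_mul (t : ℝ) :
    ConcaveOn ℝ Set.univ fun x => 1 - Real.exp (-x * t) := by
  have h_convex : ConvexOn ℝ Set.univ fun x => Real.exp (-x * t) := by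
    simpa [Function.comp_def] using convexOn_exp.comp_linearMap (-LinearMap.mulRight ℝ t)
  exact (concaveOn_const 1 convex_univ).sub h_convex

theorem monotone_one_sub_exp_neg_mul {t : ℝ} (ht : 0 ≤ t) :
    Monotone fun x => 1 - Real.exp (-x * t) := by
  intro x y hxy
  dsimp only
  gcongr

theorem mul_one_sub_exp_neg_mul_le {r₁ r₂ γ₁ γ₂ t : ℝ} (hr : r₁ ≤ r₂) (hγ₁ : 0 ≤ γ₁)
    (hγ₂ : 0 ≤ γ₂) (hκ : r₁ * γ₁ ≤ r₂ * γ₂) (ht : 0 ≤ t) :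
    r₁ * (1 - Real.exp (-γ₁ * t)) ≤ r₂ * (1 - Real.exp (-γ₂ * t)) :=
  mul_map_le_mul_map_of_concaveOn_of_monotoneOn (f := fun x => 1 - Real.exp (-x * t))
    (concaveOn_one_sub_exp_neg_mul t) ((monotone_one_sub_exp_neg_mul ht).monotoneOn _)
    (Set.mem_univ _) (by simp) (Set.mem_univ _) (Set.mem_univ _) hγ₁ hγ₂ hr hκ

/-- The cumulative kernel `K(τ)` of a class with parameters `r` and `γ`, at scale `μ`. The
division makes it meaningful only for `γ ≠ 0`. -/
noncomputable def cumulativeKernel (μ r γ τ : ℝ) : ℝ :=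
  μ * ((r - 1) * τ - (r / γ) * (1 - Real.exp (-γ * τ)))

theorem cumulativeKernel_zero (μ r γ : ℝ) : cumulativeKernel μ r γ 0 = 0 := by
  simp [cumulativeKernel]

theorem hasDerivAt_cumulativeKernel (μ r : ℝ) {γ : ℝ} (hγ : γ ≠ 0) (τ : ℝ) :
    HasDerivAt (cumulativeKernel μ r γ) (μ * (r * (1 - Real.exp (-γ * τ)) - 1)) τ := by
  have h_exp : HasDerivAt (fun t => Real.exp (-γ * t)) (Real.exp (-γ * τ) * -γ) τ :=
    (hasDerivAt_const_mul (-γ)).exp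
  have h_kernel := ((hasDerivAt_const_mul (x := τ) (r - 1)).sub
    ((h_exp.const_sub 1).const_mul (r / γ))).const_mul μ
  refine h_kernel.congr_deriv ?_
  field_simp
  ring

theorem cumulative_kernel_ordered_general {μ r₁ r₂ γ₁ γ₂ τ : ℝ} (hμ : 0 ≤ μ) (hr : r₁ ≤ r₂)
    (hγ₁ : 0 < γ₁) (hγ₂ : 0 < γ₂) (hκ : r₁ * γ₁ ≤ r₂ * γ₂) (hτ : 0 ≤ τ) :
    cumulativeKernel μ r₁ γ₁ τ ≤ cumulativeKernel μ r₂ γ₂ τ := by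
  have h_deriv₁ := hasDerivAt_cumulativeKernel μ r₁ hγ₁.ne'
  have h_deriv₂ := hasDerivAt_cumulativeKernel μ r₂ hγ₂.ne'
  refine image_le_of_deriv_right_le_deriv_boundary
    (fun t _ => (h_deriv₁ t).continuousAt.continuousWithinAt)
    (fun t _ => (h_deriv₁ t).hasDerivWithinAt)
    (by simp only [cumulativeKernel_zero, le_refl])
    (fun t _ => (h_deriv₂ t).continuousAt.continuousWithinAt)
    (fun t _ => (h_deriv₂ t).hasDerivWithinAt)
    (fun t ht => ?_) (Set.right_mem_Icc.2 hτ)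
  have h_slope := mul_one_sub_exp_neg_mul_le hr hγ₁.le hγ₂.le hκ ht.1
  gcongr

/-- If `0 < r₁ < r₂ < 1`, `γ₁, γ₂ > 0` and the effective return rates satisfy
`r₁·γ₁ ≤ r₂·γ₂`, then the cumulative kernels satisfy `K₁(τ) ≤ K₂(τ)` for all `τ ≥ 0`. -/
theorem cumulative_kernel_ordered
    (μ r₁ r₂ γ₁ γ₂ : ℝ) (hμ : 0 < μ)
    (hr₁ : 0 < r₁) (hr₁₂ : r₁ < r₂) (hr₂ : r₂ < 1)
    (hγ₁ : 0 < γ₁) (hγ₂ : 0 < γ₂)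
    (hκ : r₁ * γ₁ ≤ r₂ * γ₂)
    (K₁ K₂ : ℝ → ℝ)
    (hK₁ : ∀ τ, K₁ τ = μ * ((r₁ - 1) * τ - (r₁ / γ₁) * (1 - Real.exp (-γ₁ * τ))))
    (hK₂ : ∀ τ, K₂ τ = μ * ((r₂ - 1) * τ - (r₂ / γ₂) * (1 - Real.exp (-γ₂ * τ)))) :
    ∀ τ, 0 ≤ τ → K₁ τ ≤ K₂ τ := by
  intro τ hτ
  simpa only [hK₁, hK₂, cumulativeKernel] using
    cumulative_kernel_ordered_general hμ.le hr₁₂.le hγ₁ hγ₂ hκ hτ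
end

section
/- If 0 < r₁ < r₂ < 1, γ₁ > 0, γ₂ > 0 and r₁·γ₁ ≤ r₂·γ₂, then for every τ ≥ 0 one has r₂·(1 − e^{−γ₂τ}) − r₁·(1 − e^{−γ₁τ}) ≥ 0. -/
/-!
The function `φ x = 1 - exp (-x)` is concave and increasing with `φ 0 = 0`. For `0 ≤ r₁ ≤ r₂` and
`r₁ x ≤ r₂ y`, concavity between `0` and `x` gives `r₁ φ x ≤ r₂ φ ((r₁ / r₂) x)`, which is at most
`r₂ φ y` by monotonicity. Take `x = γ₁ τ` and `y = γ₂ τ`.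
-/

section Concave

variable {𝕜 E β : Type*} [AddCommMonoid β] [PartialOrder β] [IsOrderedAddMonoid β] {s : Set E}
  {f : E → β} {x y : E}

theorem smul_map_le_map_smul_of_concaveOn [Ring 𝕜] [PartialOrder 𝕜] [AddLeftMono 𝕜]
    [AddCommMonoid E] [Module 𝕜 E] [Module 𝕜 β] [PosSMulMono 𝕜 β]
    (hf : ConcaveOn 𝕜 s f) (h0 : 0 ∈ s) (hf0 : 0 ≤ f 0) (hx : x ∈ s) {t : 𝕜}
    (ht0 : 0 ≤ t) (ht1 : t ≤ 1) : t • f x ≤ f (t • x) := by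
  have ht1' : 0 ≤ 1 - t := sub_nonneg.2 ht1
  calc
    t • f x ≤ t • f x + (1 - t) • f 0 := le_add_of_nonneg_right (smul_nonneg ht1' hf0)
    _ ≤ f (t • x + (1 - t) • 0) := hf.2 hx h0 ht0 ht1' (add_sub_cancel t 1)
    _ = f (t • x) := by rw [smul_zero, add_zero]

theorem smul_map_le_smul_map_of_concaveOn_of_monotoneOn
    [Field 𝕜] [LinearOrder 𝕜] [IsStrictOrderedRing 𝕜]
    [AddCommMonoid E] [PartialOrder E] [Module 𝕜 E] [PosSMulMono 𝕜 E]
    [Module 𝕜 β] [PosSMulMono 𝕜 β]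
    (hf : ConcaveOn 𝕜 s f) (hmono : MonotoneOn f s) (h0 : 0 ∈ s) (hf0 : 0 ≤ f 0)
    (hx : x ∈ s) (hy : y ∈ s) {a b : 𝕜} (ha : 0 ≤ a) (hab : a ≤ b) (hxy : a • x ≤ b • y) :
    a • f x ≤ b • f y := by
  obtain rfl | hb := (ha.trans hab).eq_or_lt
  · rw [hab.antisymm ha, zero_smul, zero_smul]
  have ht0 : 0 ≤ a / b := div_nonneg ha hb.le
  have ht1 : a / b ≤ 1 := div_le_one_of_le₀ hab hb.le
  have hbt : b * (a / b) = a := mul_div_cancel₀ a hb.ne'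
  have hscaled : (a / b) • x ≤ y :=
    le_of_smul_le_smul_left (by rwa [smul_smul, hbt]) hb
  have hmem : (a / b) • x ∈ s := by
    simpa only [smul_zero, add_zero] using
      hf.1 hx h0 ht0 (sub_nonneg.2 ht1) (add_sub_cancel (a / b) 1)
  calc
    a • f x = b • (a / b) • f x := by rw [smul_smul, hbt]
    _ ≤ b • f ((a / b) • x) :=
      smul_le_smul_of_nonneg_left (smul_map_le_map_smul_of_concaveOn hf h0 hf0 hx ht0 ht1) hb.le
    _ ≤ b • f y := smul_le_smul_of_nonneg_left (hmono hmem hy hscaled) hb.le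

end Concave

theorem concaveOn_one_sub_exp_neg :
    ConcaveOn ℝ Set.univ fun x : ℝ ↦ 1 - Real.exp (-x) :=
  (concaveOn_const 1 convex_univ).sub (convexOn_exp.comp_linearMap (-LinearMap.id))

theorem monotone_one_sub_exp_neg : Monotone fun x : ℝ ↦ 1 - Real.exp (-x) :=
  fun _ _ hxy ↦ sub_le_sub_left (Real.exp_le_exp.2 (neg_le_neg hxy)) 1

theorem mul_one_sub_exp_neg_le_mul_one_sub_exp_neg {a b x y : ℝ} (ha : 0 ≤ a) (hab : a ≤ b)
    (hxy : a * x ≤ b * y) : a * (1 - Real.exp (-x)) ≤ b * (1 - Real.exp (-y)) :=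
  smul_map_le_smul_map_of_concaveOn_of_monotoneOn concaveOn_one_sub_exp_neg
    (monotone_one_sub_exp_neg.monotoneOn Set.univ) (Set.mem_univ 0) (by simp)
    (Set.mem_univ x) (Set.mem_univ y) ha hab hxy

theorem F_deriv_nonneg_general (r₁ r₂ γ₁ γ₂ : ℝ) (hr₁ : 0 ≤ r₁) (hr₁₂ : r₁ ≤ r₂)
    (hκ : r₁ * γ₁ ≤ r₂ * γ₂) :
    ∀ τ, 0 ≤ τ →
      0 ≤ r₂ * (1 - Real.exp (-γ₂ * τ)) - r₁ * (1 - Real.exp (-γ₁ * τ)) := by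
  intro τ hτ
  have hκτ : r₁ * (γ₁ * τ) ≤ r₂ * (γ₂ * τ) := by
    simpa only [mul_assoc] using mul_le_mul_of_nonneg_right hκ hτ
  rw [neg_mul, neg_mul, sub_nonneg]
  exact mul_one_sub_exp_neg_le_mul_one_sub_exp_neg hr₁ hr₁₂ hκτ

/-- If `0 < r₁ < r₂ < 1`, `γ₁, γ₂ > 0` and `r₁·γ₁ ≤ r₂·γ₂`, then
`r₂·(1 − e^{−γ₂τ}) − r₁·(1 − e^{−γ₁τ}) ≥ 0` for every `τ ≥ 0`. -/
theorem F_deriv_nonneg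
    (r₁ r₂ γ₁ γ₂ : ℝ)
    (hr₁ : 0 < r₁) (hr₁₂ : r₁ < r₂) (hr₂ : r₂ < 1)
    (hγ₁ : 0 < γ₁) (hγ₂ : 0 < γ₂)
    (hκ : r₁ * γ₁ ≤ r₂ * γ₂) :
    ∀ τ, 0 ≤ τ →
      0 ≤ r₂ * (1 - Real.exp (-γ₂ * τ)) - r₁ * (1 - Real.exp (-γ₁ * τ)) :=
  F_deriv_nonneg_general r₁ r₂ γ₁ γ₂ hr₁.le hr₁₂.le hκ
end

section
/- Fix r ∈ (0,1) and γ > 0. For x > 0 let t(x) be the unique nonnegative solution of x = (1−r)·t + (r/γ)·(1 − e^{−γt}), and set a(x) = r·(1 − e^{−γ·t(x)}). Then, as x → 0⁺, a(x) = r·γ·x − ((1−r)·r·γ²/2)·x² + O(x³). -/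
open Filter Asymptotics Topology

/-!
Let `x(t)` be the backlog cleared at depletion time `t`. Then `x(t) - t = O(t²)`, hence
`x(t)² - t² = O(t³)`. The expansion follows from the identity
`a - (rγx - (1-r)rγ²x²/2) = r(1-r) (γ²(x² - t²)/2 - (exp(-γt) - 1 + γt - γ²t²/2))`:
its right-hand side is `O(t³)`, and `t` is equivalent to `x` once `t → 0`. The convergence `t → 0`
comes from `1 - exp(-γt) ≤ γx`.
-/

/-- The scaled backlog that is cleared at the scaled depletion time `t`, for a class with return
probability `r` and return rate `γ`; it is meaningful only for `γ ≠ 0`, because of `r / γ`. -/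
noncomputable def scaledBacklog (r γ t : ℝ) : ℝ :=
  (1 - r) * t + (r / γ) * (1 - Real.exp (-γ * t))

/-- The fraction of capacity that keeps the primary queue of a class with return probability `r`
and return rate `γ` empty after the scaled depletion time `t`. -/
noncomputable def residualAllocation (r γ t : ℝ) : ℝ :=
  r * (1 - Real.exp (-γ * t))

theorem exp_mul_sub_sum_range_isBigO_pow (c : ℝ) (n : ℕ) :
    (fun t => Real.exp (c * t) - ∑ i ∈ Finset.range n, (c * t) ^ i / i.factorial)
      =O[𝓝 0] (fun t => t ^ n) := by
  have hlim : Tendsto (fun t => c * t) (𝓝 0) (𝓝 0) :=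
    (continuous_const_mul c).tendsto' 0 0 (mul_zero c)
  exact ((Real.exp_sub_sum_range_isBigO_pow n).comp_tendsto hlim).trans
    ((isBigO_const_mul_self c id (𝓝 0)).pow n)

section Expansion

variable (r : ℝ) {γ : ℝ}

theorem mul_scaledBacklog (hγ : γ ≠ 0) (t : ℝ) :
    γ * scaledBacklog r γ t = (1 - r) * (γ * t) + r * (1 - Real.exp (-γ * t)) := by
  rw [scaledBacklog]
  field_simp

theorem scaledBacklog_sub_self_isBigO_sq (hγ : γ ≠ 0) :
    (fun t => scaledBacklog r γ t - t) =O[𝓝 0] (fun t => t ^ 2) := by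
  refine ((exp_mul_sub_sum_range_isBigO_pow (-γ) 2).const_mul_left
    (-(r / γ))).congr_left fun t => ?_
  simp only [scaledBacklog, Finset.sum_range_succ, Finset.sum_range_zero, Nat.factorial]
  field_simp
  ring

theorem scaledBacklog_isEquivalent_id (hγ : γ ≠ 0) : scaledBacklog r γ ~[𝓝 0] id :=
  (scaledBacklog_sub_self_isBigO_sq r hγ).trans_isLittleO (isLittleO_pow_id one_lt_two)

theorem scaledBacklog_sq_sub_sq_isBigO_cube (hγ : γ ≠ 0) :
    (fun t => scaledBacklog r γ t ^ 2 - t ^ 2) =O[𝓝 0] (fun t => t ^ 3) := by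
  have hsum : (fun t => scaledBacklog r γ t + t) =O[𝓝 0] (fun t => t) :=
    (scaledBacklog_isEquivalent_id r hγ).isBigO.add (isBigO_refl _ _)
  exact ((scaledBacklog_sub_self_isBigO_sq r hγ).mul hsum).congr
    (fun t => by ring) (fun t => by ring)

theorem residualAllocation_sub_quadratic_isBigO_cube (hγ : γ ≠ 0) :
    (fun t => residualAllocation r γ t -
        (r * γ * scaledBacklog r γ t - ((1 - r) * r * γ ^ 2 / 2) * scaledBacklog r γ t ^ 2))
      =O[𝓝 0] (fun t => t ^ 3) := by
  have hsq := (scaledBacklog_sq_sub_sq_isBigO_cube r hγ).const_mul_left (γ ^ 2 / 2)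
  refine ((hsq.sub (exp_mul_sub_sum_range_isBigO_pow (-γ) 3)).const_mul_left
    (r * (1 - r))).congr_left fun t => ?_
  simp only [residualAllocation, Finset.sum_range_succ, Finset.sum_range_zero, Nat.factorial]
  push_cast
  linear_combination r * mul_scaledBacklog r hγ t

end Expansion

section DepletionTime

variable {r γ : ℝ}

theorem one_sub_exp_le_mul_scaledBacklog (hr : r ≤ 1) (hγ : 0 < γ) (t : ℝ) :
    1 - Real.exp (-γ * t) ≤ γ * scaledBacklog r γ t := by
  have hexp : 1 - Real.exp (-γ * t) ≤ γ * t := by linarith [Real.add_one_le_exp (-γ * t)]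
  calc 1 - Real.exp (-γ * t)
      = (1 - r) * (1 - Real.exp (-γ * t)) + r * (1 - Real.exp (-γ * t)) := by ring
    _ ≤ (1 - r) * (γ * t) + r * (1 - Real.exp (-γ * t)) := by
      gcongr
    _ = γ * scaledBacklog r γ t := (mul_scaledBacklog r hγ.ne' t).symm

theorem tendsto_zero_of_tendsto_scaledBacklog {α : Type*} {l : Filter α} {t : α → ℝ}
    (hr : r ≤ 1) (hγ : 0 < γ) (ht : ∀ᶠ x in l, 0 ≤ t x)
    (hlim : Tendsto (fun x => scaledBacklog r γ (t x)) l (𝓝 0)) : Tendsto t l (𝓝 0) := by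
  have hbound : Tendsto (fun x => γ * scaledBacklog r γ (t x)) l (𝓝 0) := by
    simpa only [mul_zero] using hlim.const_mul γ
  have hsub : Tendsto (fun x => 1 - Real.exp (-γ * t x)) l (𝓝 0) := by
    refine squeeze_zero' (ht.mono fun x hx => ?_)
      (.of_forall fun x => one_sub_exp_le_mul_scaledBacklog hr hγ (t x)) hbound
    rw [sub_nonneg, Real.exp_le_one_iff]
    exact mul_nonpos_of_nonpos_of_nonneg (neg_nonpos.2 hγ.le) hx
  have hexp : Tendsto (fun x => Real.exp (-γ * t x)) l (𝓝 1) := by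
    simpa only [sub_sub_cancel, sub_zero] using hsub.const_sub 1
  have hlog : Tendsto (fun x => -γ * t x) l (𝓝 0) := by
    simpa only [Real.log_exp, Real.log_one] using hexp.log one_ne_zero
  simpa only [inv_mul_cancel_left₀ (neg_ne_zero.2 hγ.ne'), mul_zero] using hlog.const_mul (-γ)⁻¹

end DepletionTime

theorem residual_allocation_expansion_general {r γ : ℝ} (hr : r ≤ 1) (hγ : 0 < γ) {t : ℝ → ℝ}
    (ht : ∀ᶠ x in 𝓝[>] (0 : ℝ), 0 ≤ t x ∧ x = scaledBacklog r γ (t x)) :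
    (fun x => residualAllocation r γ (t x) -
        (r * γ * x - ((1 - r) * r * γ ^ 2 / 2) * x ^ 2))
      =O[𝓝[>] (0 : ℝ)] (fun x => x ^ 3) := by
  have hx : (fun x => x) =ᶠ[𝓝[>] 0] fun x => scaledBacklog r γ (t x) := ht.mono fun _ h => h.2
  have htime : Tendsto t (𝓝[>] 0) (𝓝 0) :=
    tendsto_zero_of_tendsto_scaledBacklog hr hγ (ht.mono fun _ h => h.1)
      ((tendsto_nhdsWithin_of_tendsto_nhds tendsto_id).congr' hx)
  have hcube : (fun t => t ^ 3) =O[𝓝 0] (fun t => scaledBacklog r γ t ^ 3) :=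
    (scaledBacklog_isEquivalent_id r hγ.ne').isBigO_symm.pow 3
  refine (((residualAllocation_sub_quadratic_isBigO_cube r hγ.ne').trans hcube).comp_tendsto
    htime).congr' ?_ ?_
  all_goals
    filter_upwards [hx] with x hx
    simp only [Function.comp_apply, ← hx]

/-- Taylor expansion of the residual allocation as `x → 0⁺`:
`a(x) = rγx − ((1−r)rγ²/2)x² + O(x³)`, where `a(x) = r(1 − e^{−γ·t(x)})` and
`t(x)` is the unique nonnegative solution of `x = (1−r)t + (r/γ)(1 − e^{−γt})`. -/
theorem residual_allocation_expansion
    (r γ : ℝ) (hr0 : 0 < r) (hr1 : r < 1) (hγ : 0 < γ)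
    (t : ℝ → ℝ)
    (ht : ∀ x, 0 < x → 0 ≤ t x ∧
      x = (1 - r) * t x + (r / γ) * (1 - Real.exp (-γ * t x)))
    (a : ℝ → ℝ)
    (ha : ∀ x, a x = r * (1 - Real.exp (-γ * t x))) :
    (fun x => a x - (r * γ * x - ((1 - r) * r * γ ^ 2 / 2) * x ^ 2))
      =O[𝓝[>] (0:ℝ)] (fun x => x ^ 3) := by
  obtain rfl : a = fun x => residualAllocation r γ (t x) := funext ha
  exact residual_allocation_expansion_general hr1.le hγ (eventually_mem_nhdsWithin.mono ht)
end

section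
/- Fix r ∈ (0,1) and γ > 0. For x > 0 let t(x) be the unique nonnegative solution of x = (1−r)·t + (r/γ)·(1 − e^{−γt}), and define the scaled Stage-A cost c(x) = 2·x·t(x) − ((1−r)/2)·t(x)² − (r/γ)·(t(x) − (1 − e^{−γ·t(x)})/γ). Then, as x → 0⁺, c(x) = (3/2)·x² + (2/3)·γ·r·x³ + O(x⁴). -/
open Filter Asymptotics Topology

/-!
Write `f` for the net drain, so that `x = f (t x)` and the cost is `2 x t - F (t)` with `F` the
primitive of `f`. As `s → 0`, with `a = γ r`, `f s = s - (a/2) s² + O(s³)` and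
`F s = s²/2 - (a/6) s³ + O(s⁴)`. In `2 f s - F` minus the claimed `(3/2) f² + (2/3) a f³`
all terms of order two and three cancel; since `f s ~ s`, the remaining `O(s⁴)` is `O(x⁴)`.
-/

/-- The amount by which the primary queue served first has decreased after (scaled) time `s`:
it loses work at rate `1`, while a fraction `r` comes back through a return queue with rate `γ`.
The primary queue is thus `x - netDrain r γ s`, and Stage A ends when it vanishes. -/
noncomputable def netDrain (r γ s : ℝ) : ℝ :=
  (1 - r) * s + (r / γ) * (1 - Real.exp (-γ * s))

/-- The primitive of `netDrain r γ` vanishing at `0`, written in closed form. The two primary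
queues `x - netDrain r γ s` and `x` cost `2 x T - cumulativeNetDrain r γ T` up to time `T`. -/
noncomputable def cumulativeNetDrain (r γ T : ℝ) : ℝ :=
  ((1 - r) / 2) * T ^ 2 + (r / γ) * (T - (1 - Real.exp (-γ * T)) / γ)

section Taylor

theorem exp_neg_mul_sub_sum_range_isBigO_pow (γ : ℝ) (n : ℕ) :
    (fun s : ℝ => Real.exp (-γ * s) - ∑ i ∈ Finset.range n, (-γ * s) ^ i / i.factorial)
      =O[𝓝 0] (fun s => s ^ n) := by
  have h_lim : Tendsto (fun s : ℝ => -γ * s) (𝓝 0) (𝓝 0) :=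
    Continuous.tendsto' (by fun_prop) _ _ (mul_zero _)
  exact ((Real.exp_sub_sum_range_isBigO_pow n).comp_tendsto h_lim).trans
    (((isBigO_refl _ _).const_mul_left (-γ)).pow n)

variable {γ : ℝ}

theorem netDrain_sub_isBigO (r : ℝ) (hγ : γ ≠ 0) :
    (fun s => netDrain r γ s - (s - γ * r / 2 * s ^ 2)) =O[𝓝 0] (fun s => s ^ 3) := by
  refine ((exp_neg_mul_sub_sum_range_isBigO_pow γ 3).const_mul_left (-(r / γ))).congr_left
    fun s => ?_
  simp only [netDrain, Finset.sum_range_succ, Finset.sum_range_zero, Nat.factorial]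
  field_simp
  push_cast
  ring

theorem cumulativeNetDrain_sub_isBigO (r : ℝ) (hγ : γ ≠ 0) :
    (fun s => cumulativeNetDrain r γ s - (s ^ 2 / 2 - γ * r / 6 * s ^ 3))
      =O[𝓝 0] (fun s => s ^ 4) := by
  refine ((exp_neg_mul_sub_sum_range_isBigO_pow γ 4).const_mul_left (r / γ ^ 2)).congr_left
    fun s => ?_
  simp only [cumulativeNetDrain, Finset.sum_range_succ, Finset.sum_range_zero, Nat.factorial]
  field_simp
  push_cast
  ring

end Taylor

section Expansion

variable {a : ℝ} {f F : ℝ → ℝ}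

theorem sub_id_isBigO_sq_of_expansion
    (hf : (fun s => f s - (s - a / 2 * s ^ 2)) =O[𝓝 0] (fun s => s ^ 3)) :
    (fun s => f s - s) =O[𝓝 0] (fun s => s ^ 2) := by
  have h_cube : (fun s : ℝ => s ^ 3) =O[𝓝 0] (fun s => s ^ 2) :=
    (isLittleO_pow_pow (by norm_num)).isBigO
  refine ((hf.trans h_cube).sub ((isBigO_refl _ _).const_mul_left (a / 2))).congr_left
    fun s => ?_
  ring

theorem isEquivalent_id_of_sub_isBigO_sq (hf : (fun s => f s - s) =O[𝓝 0] (fun s => s ^ 2)) :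
    f ~[𝓝 0] (fun s => s) :=
  hf.trans_isLittleO (isLittleO_pow_id one_lt_two)

theorem cube_sub_cube_isBigO_of_sub_isBigO_sq
    (hf : (fun s => f s - s) =O[𝓝 0] (fun s => s ^ 2)) :
    (fun s => f s ^ 3 - s ^ 3) =O[𝓝 0] (fun s => s ^ 4) := by
  have hfs : f =O[𝓝 0] (fun s => s) := (isEquivalent_id_of_sub_isBigO_sq hf).isBigO
  have hss : (fun s : ℝ => s) =O[𝓝 0] (fun s => s) := isBigO_refl _ _
  have h_quad : (fun s => f s * f s + f s * s + s * s) =O[𝓝 0] (fun s => s * s) :=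
    ((hfs.mul hfs).add (hfs.mul hss)).add (hss.mul hss)
  exact (hf.mul h_quad).congr (fun s => by ring) (fun s => by ring)

theorem two_mul_mul_sub_sub_isBigO_pow_four
    (hf : (fun s => f s - (s - a / 2 * s ^ 2)) =O[𝓝 0] (fun s => s ^ 3))
    (hF : (fun s => F s - (s ^ 2 / 2 - a / 6 * s ^ 3)) =O[𝓝 0] (fun s => s ^ 4)) :
    (fun s => 2 * f s * s - F s - ((3 / 2) * f s ^ 2 + (2 / 3) * a * f s ^ 3))
      =O[𝓝 0] (fun s => f s ^ 4) := by
  have h_sub : (fun s => f s - s) =O[𝓝 0] (fun s => s ^ 2) := sub_id_isBigO_sq_of_expansion hf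
  have h_id : (fun s => s) =O[𝓝 0] f := (isEquivalent_id_of_sub_isBigO_sq h_sub).isBigO_symm
  have h_linear : (fun s => s * (f s - (s - a / 2 * s ^ 2))) =O[𝓝 0] (fun s => s ^ 4) :=
    ((isBigO_refl (fun s : ℝ => s) _).mul hf).congr_right fun s => by ring
  have h_square : (fun s => 3 / 2 * (f s - s) ^ 2) =O[𝓝 0] (fun s => s ^ 4) :=
    ((h_sub.pow 2).const_mul_left _).congr_right fun s => by ring
  have h_cube : (fun s => 2 / 3 * a * (f s ^ 3 - s ^ 3)) =O[𝓝 0] (fun s => s ^ 4) :=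
    (cube_sub_cube_isBigO_of_sub_isBigO_sq h_sub).const_mul_left _
  have h_remainder : ∀ s, 2 * f s * s - F s - ((3 / 2) * f s ^ 2 + (2 / 3) * a * f s ^ 3)
      = -(s * (f s - (s - a / 2 * s ^ 2))) - (F s - (s ^ 2 / 2 - a / 6 * s ^ 3))
        - 3 / 2 * (f s - s) ^ 2 - 2 / 3 * a * (f s ^ 3 - s ^ 3) := fun s => by ring
  simp only [h_remainder]
  exact (((h_linear.neg_left.sub hF).sub h_square).sub h_cube).trans (h_id.pow 4)

end Expansion

section Clearing

variable {r : ℝ}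

theorem one_sub_exp_neg_mul_div_nonneg (γ : ℝ) {s : ℝ} (hs : 0 ≤ s) :
    0 ≤ (1 - Real.exp (-γ * s)) / γ := by
  rcases le_total 0 γ with hγ | hγ
  · have h_exp : Real.exp (-γ * s) ≤ 1 := Real.exp_le_one_iff.2 (by nlinarith)
    exact div_nonneg (by linarith) hγ
  · have h_exp : 1 ≤ Real.exp (-γ * s) := Real.one_le_exp (by nlinarith)
    exact div_nonneg_of_nonpos (by linarith) hγ

theorem one_sub_mul_le_netDrain (γ : ℝ) {s : ℝ} (hr : 0 ≤ r) (hs : 0 ≤ s) :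
    (1 - r) * s ≤ netDrain r γ s := by
  have h_returned : 0 ≤ r * ((1 - Real.exp (-γ * s)) / γ) :=
    mul_nonneg hr (one_sub_exp_neg_mul_div_nonneg γ hs)
  rw [netDrain, div_mul_eq_mul_div, mul_div_assoc]
  linarith

theorem tendsto_zero_of_eventually_eq_netDrain {l : Filter ℝ} {t : ℝ → ℝ} {γ : ℝ} (hr0 : 0 ≤ r)
    (hr1 : r < 1) (hl : l ≤ 𝓝 0) (ht : ∀ᶠ x in l, 0 ≤ t x ∧ x = netDrain r γ (t x)) :
    Tendsto t l (𝓝 0) := by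
  have h_bound : ∀ᶠ x in l, t x ≤ x / (1 - r) := by
    filter_upwards [ht] with x ⟨h_nonneg, h_clear⟩
    rw [le_div_iff₀' (sub_pos.2 hr1)]
    exact (one_sub_mul_le_netDrain γ hr0 h_nonneg).trans_eq h_clear.symm
  have h_lim : Tendsto (fun x => x / (1 - r)) l (𝓝 0) := by
    simpa only [zero_div, id_eq] using (tendsto_id.mono_left hl).div_const (1 - r)
  exact squeeze_zero' (ht.mono fun _ => And.left) h_bound h_lim

end Clearing

theorem stageA_cost_expansion_small_general {r γ : ℝ} (hγ : γ ≠ 0) {l : Filter ℝ} {t c : ℝ → ℝ}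
    (ht0 : Tendsto t l (𝓝 0)) (ht : ∀ᶠ x in l, x = netDrain r γ (t x))
    (hc : ∀ᶠ x in l, c x = 2 * x * t x - cumulativeNetDrain r γ (t x)) :
    (fun x => c x - ((3 / 2) * x ^ 2 + (2 / 3) * γ * r * x ^ 3)) =O[l] (fun x => x ^ 4) := by
  have h_expansion := (two_mul_mul_sub_sub_isBigO_pow_four (netDrain_sub_isBigO r hγ)
    (cumulativeNetDrain_sub_isBigO r hγ)).comp_tendsto ht0
  refine h_expansion.congr' ?_ ?_
  · filter_upwards [ht, hc] with x hx hcx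
    simp only [Function.comp_apply, ← hx, hcx, mul_assoc]
  · filter_upwards [ht] with x hx
    simp only [Function.comp_apply, ← hx]

/-- Expansion of the scaled Stage-A cost as `x → 0⁺`:
`c(x) = (3/2)x² + (2/3)γr·x³ + O(x⁴)`, where
`c(x) = 2x·t(x) − ((1−r)/2)t(x)² − (r/γ)(t(x) − (1 − e^{−γ·t(x)})/γ)` and
`t(x)` is the unique nonnegative solution of `x = (1−r)t + (r/γ)(1 − e^{−γt})`. -/
theorem stageA_cost_expansion_small
    (r γ : ℝ) (hr0 : 0 < r) (hr1 : r < 1) (hγ : 0 < γ)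
    (t : ℝ → ℝ)
    (ht : ∀ x, 0 < x → 0 ≤ t x ∧
      x = (1 - r) * t x + (r / γ) * (1 - Real.exp (-γ * t x)))
    (c : ℝ → ℝ)
    (hc : ∀ x, c x = 2 * x * t x - ((1 - r) / 2) * (t x) ^ 2
      - (r / γ) * (t x - (1 - Real.exp (-γ * t x)) / γ)) :
    (fun x => c x - ((3 / 2) * x ^ 2 + (2 / 3) * γ * r * x ^ 3))
      =O[𝓝[>] (0:ℝ)] (fun x => x ^ 4) := by
  have h_clear : ∀ᶠ x in 𝓝[>] (0:ℝ), 0 ≤ t x ∧ x = netDrain r γ (t x) :=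
    eventually_mem_nhdsWithin.mono ht
  exact stageA_cost_expansion_small_general hγ.ne'
    (tendsto_zero_of_eventually_eq_netDrain hr0.le hr1 nhdsWithin_le_nhds h_clear)
    (h_clear.mono fun _ => And.right) (.of_forall fun x => (hc x).trans (sub_sub _ _ _))
end

section
/- Fix r ∈ (0,1), γ > 0, μ > 0. For ε > 0 let t(ε) be the unique nonnegative solution of ε = μ·((1−r)·t + (r/γ)·(1 − e^{−γt})), and define C^(A)(ε) = 2·ε·t(ε) − ((1−r)·μ/2)·t(ε)² − (r·μ/γ)·t(ε) + (r·μ/γ²)·(1 − e^{−γ·t(ε)}). Then, as ε → ∞, t(ε) = ε/((1−r)·μ) + O(1) and C^(A)(ε) = 3·ε²/(2·(1−r)·μ) + O(ε). -/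
open Filter Asymptotics

/-!
Write `a = (1 - r) * μ`. As `1 - e^{-γt}` stays bounded for `t ≥ 0`, the depletion equation shows
that the error `δ = t - ε / a` is bounded. The cost is `2εt - (a / 2)t²` up to terms of order `t`,
and substituting `t = ε / a + δ` turns this into `3ε² / (2a) + εδ - (a / 2)δ²`.
-/

section ErrorTerms

variable {α 𝕜 : Type*} [NormedField 𝕜] {l : Filter α} {f g t : α → 𝕜} {a : 𝕜}

theorem isBigO_sub_div_of_isBigO_sub_const_mul (ha : a ≠ 0)
    (h : (fun x => f x - a * t x) =O[l] g) : (fun x => t x - f x / a) =O[l] g := by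
  refine (h.const_mul_left (-a⁻¹)).congr_left fun x => ?_
  field_simp
  ring

theorem isBigO_of_isBigO_sub_div (hg : g =O[l] f) (h : (fun x => t x - f x / a) =O[l] g) :
    t =O[l] f := by
  refine ((h.trans hg).add ((isBigO_refl f l).const_mul_left a⁻¹)).congr_left fun x => ?_
  rw [div_eq_inv_mul, sub_add_cancel]

theorem isBigO_two_mul_sub_half_mul_sq_sub [NeZero (2 : 𝕜)] (ha : a ≠ 0) (hg : g =O[l] f)
    (h : (fun x => t x - f x / a) =O[l] g) :
    (fun x => 2 * f x * t x - a / 2 * t x ^ 2 - 3 * f x ^ 2 / (2 * a)) =O[l]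
      (fun x => f x * g x) := by
  have linear_term : (fun x => f x * (t x - f x / a)) =O[l] (fun x => f x * g x) :=
    (isBigO_refl f l).mul h
  have square_term : (fun x => a / 2 * ((t x - f x / a) * (t x - f x / a))) =O[l]
      (fun x => f x * g x) :=
    ((h.trans hg).mul h).const_mul_left (a / 2)
  refine (linear_term.sub square_term).congr_left fun x => ?_
  field_simp
  ring

end ErrorTerms

theorem isBigO_one_sub_exp {α : Type*} {l : Filter α} {u : α → ℝ}
    (hu : l.IsBoundedUnder (· ≤ ·) u) : (fun x => 1 - Real.exp (u x)) =O[l] (fun _ => (1 : ℝ)) :=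
  (isBigO_refl _ l).sub (Real.isBigO_exp_comp_one.2 hu)

theorem stageA_cost_expansion_large_general {r γ μ : ℝ} (hr : r ≠ 1) (hγ : 0 < γ) (hμ : μ ≠ 0)
    {t CA : ℝ → ℝ}
    (ht : ∀ᶠ ε in atTop, 0 ≤ t ε ∧
      ε = μ * ((1 - r) * t ε + (r / γ) * (1 - Real.exp (-γ * t ε))))
    (hCA : ∀ᶠ ε in atTop, CA ε = 2 * ε * t ε - ((1 - r) * μ / 2) * (t ε) ^ 2
      - (r * μ / γ) * t ε + (r * μ / γ ^ 2) * (1 - Real.exp (-γ * t ε))) :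
    ((fun ε => t ε - ε / ((1 - r) * μ)) =O[atTop] (fun _ => (1 : ℝ))) ∧
    ((fun ε => CA ε - 3 * ε ^ 2 / (2 * (1 - r) * μ)) =O[atTop] (fun ε => ε)) := by
  have ha : (1 - r) * μ ≠ 0 := mul_ne_zero (sub_ne_zero.2 hr.symm) hμ
  have one_isBigO : (fun _ => (1 : ℝ)) =O[atTop] (fun ε : ℝ => ε) :=
    (isLittleO_const_id_atTop 1).isBigO
  have returned : (fun ε => 1 - Real.exp (-γ * t ε)) =O[atTop] (fun _ => (1 : ℝ)) :=
    isBigO_one_sub_exp <| isBoundedUnder_of_eventually_le <| ht.mono fun ε h =>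
      mul_nonpos_of_nonpos_of_nonneg (neg_nonpos.2 hγ.le) h.1
  have time : (fun ε => t ε - ε / ((1 - r) * μ)) =O[atTop] (fun _ => (1 : ℝ)) := by
    refine isBigO_sub_div_of_isBigO_sub_const_mul ha <|
      (returned.const_mul_left (μ * (r / γ))).congr' (ht.mono fun ε h => ?_) .rfl
    linear_combination -h.2
  have main_term : (fun ε => 2 * ε * t ε - (1 - r) * μ / 2 * t ε ^ 2
      - 3 * ε ^ 2 / (2 * ((1 - r) * μ))) =O[atTop] (fun ε => ε) := by
    simpa only [mul_one] using isBigO_two_mul_sub_half_mul_sq_sub ha one_isBigO time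
  have linear_term := (isBigO_of_isBigO_sub_div one_isBigO time).const_mul_left (r * μ / γ)
  have return_term := (returned.trans one_isBigO).const_mul_left (r * μ / γ ^ 2)
  refine ⟨time, ((main_term.sub linear_term).add return_term).congr' (hCA.mono fun ε h => ?_) .rfl⟩
  linear_combination -h

/-- Large-load asymptotics of the depletion time and the Stage-A cost as
`ε → ∞`: `t(ε) = ε/((1−r)μ) + O(1)` and `C^(A)(ε) = 3ε²/(2(1−r)μ) + O(ε)`,
where `t(ε)` is the unique nonnegative solution of
`ε = μ((1−r)t + (r/γ)(1 − e^{−γt}))` and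
`C^(A)(ε) = 2ε·t(ε) − ((1−r)μ/2)t(ε)² − (rμ/γ)t(ε) + (rμ/γ²)(1 − e^{−γ·t(ε)})`. -/
theorem stageA_cost_expansion_large
    (r γ μ : ℝ) (hr0 : 0 < r) (hr1 : r < 1) (hγ : 0 < γ) (hμ : 0 < μ)
    (t : ℝ → ℝ)
    (ht : ∀ ε, 0 < ε → 0 ≤ t ε ∧
      ε = μ * ((1 - r) * t ε + (r / γ) * (1 - Real.exp (-γ * t ε))))
    (CA : ℝ → ℝ)
    (hCA : ∀ ε, CA ε = 2 * ε * t ε - ((1 - r) * μ / 2) * (t ε) ^ 2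
      - (r * μ / γ) * t ε + (r * μ / γ ^ 2) * (1 - Real.exp (-γ * t ε))) :
    ((fun ε => t ε - ε / ((1 - r) * μ)) =O[atTop] (fun _ => (1 : ℝ))) ∧
    ((fun ε => CA ε - 3 * ε ^ 2 / (2 * (1 - r) * μ)) =O[atTop] (fun ε => ε)) :=
  stageA_cost_expansion_large_general hr1.ne hγ hμ.ne'
    ((eventually_gt_atTop 0).mono ht) (.of_forall hCA)
end
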